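/- arXiv:2009.03492 — 17 statements merged into one kernel-verified Lean document; each statement's English description precedes it below -/
import Mathlib

section
/- Let G be a group and let B : G → G be a Rota-Baxter operator (of weight 1) on G. Then the map B̃ : G → G defined by B̃(g) = g⁻¹ · B(g⁻¹) is also a Rota-Baxter operator (of weight 1) on G, i.e. B̃(g)·B̃(h) = B̃(g · B̃(g)·h·B̃(g)⁻¹) for all g, h ∈ G. -/
/-- If `B` is a Rota-Baxter operator (of weight 1) on a group `G`, then
`B̃ g = g⁻¹ * B g⁻¹` is also a Rota-Baxter operator (of weight 1) on `G`. -/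
theorem stmt0 {G : Type*} [Group G] (B : G → G)
    (hB : ∀ g h : G, B g * B h = B (g * (B g * h * (B g)⁻¹)))
    (Bt : G → G) (hBt : ∀ g : G, Bt g = g⁻¹ * B g⁻¹) :
    ∀ g h : G, Bt g * Bt h = Bt (g * (Bt g * h * (Bt g)⁻¹)) := by
  intro g h
  -- With `a = g⁻¹`, `b = h⁻¹`, the argument on the right is the inverse of `a * B a * b * (B a)⁻¹`,
  -- to which the Rota-Baxter identity for `a` and `b` applies.
  have key : (g * (Bt g * h * (Bt g)⁻¹))⁻¹ = g⁻¹ * (B g⁻¹ * h⁻¹ * (B g⁻¹)⁻¹) := by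
    rw [hBt g]; group
  rw [hBt (g * _), key, ← hB, hBt g, hBt h]
  group
end

section
/- Let G be a group and let G₊, G₋ be subgroups of G such that G = G₊·G₋ (every element of G is a product of an element of G₊ and an element of G₋) and G₊ ∩ G₋ = {e}. Define B : G → G by B(g) = g₋⁻¹, where g = g₊·g₋ is the (unique) decomposition with g₊ ∈ G₊ and g₋ ∈ G₋. Then B is a Rota-Baxter operator (of weight 1) on G. -/
/-- If `G = Gp · Gm` with `Gp ∩ Gm = {e}`, then `B (gp * gm) = gm⁻¹` is a
Rota-Baxter operator (of weight 1) on `G`. -/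
theorem stmt2 {G : Type*} [Group G] (Gp Gm : Subgroup G)
    (hdisj : Gp ⊓ Gm = ⊥)
    (pp pm : G → G) (hpp : ∀ g : G, pp g ∈ Gp) (hpm : ∀ g : G, pm g ∈ Gm)
    (hdec : ∀ g : G, g = pp g * pm g)
    (B : G → G) (hB : ∀ g : G, B g = (pm g)⁻¹) :
    ∀ g h : G, B g * B h = B (g * (B g * h * (B g)⁻¹)) := by
  intro g h
  -- Since `g * B g = pp g`, the argument of `B` on the right factors as
  -- `(pp g * pp h) * (pm h * pm g)`.
  have hx : g * (B g * h * (B g)⁻¹) = (pp g * pp h) * (pm h * pm g) := by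
    have hg : g * B g = pp g := by rw [hB, mul_inv_eq_iff_eq_mul]; exact hdec g
    calc g * (B g * h * (B g)⁻¹) = (g * B g) * h * (B g)⁻¹ := by group
      _ = pp g * (pp h * pm h) * pm g := by rw [hg, ← hdec h, hB, inv_inv]
      _ = _ := by group
  rw [hB (g * _), hx]
  set x := (pp g * pp h) * (pm h * pm g) with hxdef
  have hpmx : pm x = pm h * pm g :=
    congrArg (fun p => (p.2 : G)) <| Subgroup.mul_injective_of_disjoint (disjoint_iff.mpr hdisj)
      (a₁ := (⟨pp x, hpp x⟩, ⟨pm x, hpm x⟩))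
      (a₂ := (⟨pp g * pp h, mul_mem (hpp g) (hpp h)⟩, ⟨pm h * pm g, mul_mem (hpm h) (hpm g)⟩))
      (hdec x).symm
  rw [hpmx, mul_inv_rev, hB, hB]
end

section
/- Let G be a group and consider the semidirect product group G ⋊ G built from the conjugation action of G on itself, whose underlying set is G × G with multiplication (h₁, g₁)·(h₂, g₂) = (h₁ · g₁h₂g₁⁻¹, g₁g₂). Then a map B : G → G is a Rota-Baxter operator (of weight 1) on G if and only if its graph {(g, B(g)) : g ∈ G} is a subgroup of G ⋊ G. -/
/-!
The product of the graph points `(g, B g)` and `(h, B h)` in `G ⋊ G` is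
`(g * (B g * h * (B g)⁻¹), B g * B h)`, so the Rota-Baxter identity says exactly that the graph
is closed under multiplication. The other subgroup axioms follow from it: `g = h = 1` makes
`B 1` idempotent, hence `B 1 = 1`, and `h = (B g)⁻¹ * g⁻¹ * B g` gives `B g * B h = B 1 = 1`,
so the graph contains inverses.
-/

/-- A map `B : G → G` is a Rota-Baxter operator (of weight 1) on a group `G`
iff its graph `{(g, B g)}` is a subgroup of the semidirect product `G ⋊ G`
built from the conjugation action of `G` on itself. -/
theorem stmt3 {G : Type*} [Group G] (B : G → G) :
    (∀ g h : G, B g * B h = B (g * (B g * h * (B g)⁻¹))) ↔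
      ∃ H : Subgroup (G ⋊[MulAut.conj] G),
        (H : Set (G ⋊[MulAut.conj] G)) = {x | x.right = B x.left} := by
  constructor
  · intro hB
    have h1 : B 1 = 1 := by simpa using hB 1 1
    refine ⟨{ carrier := {x | x.right = B x.left}, mul_mem' := ?_, one_mem' := ?_,
              inv_mem' := ?_ }, rfl⟩
    · intro x y hx hy
      simp only [Set.mem_setOf_eq] at hx hy ⊢
      simp only [SemidirectProduct.mul_left, SemidirectProduct.mul_right, MulAut.conj_apply,
        hx, hy, hB]
    · simp [h1]
    · intro x hx
      simp only [Set.mem_setOf_eq] at hx ⊢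
      have h := hB x.left ((B x.left)⁻¹ * x.left⁻¹ * B x.left)
      have e : x.left * (B x.left * ((B x.left)⁻¹ * x.left⁻¹ * B x.left) * (B x.left)⁻¹) = 1 := by
        group
      rw [e, h1] at h
      simpa [hx, MulAut.inv_def, MulAut.conj_symm_apply] using inv_eq_of_mul_eq_one_right h
  · rintro ⟨H, hH⟩ g h
    have mem : ∀ x, x ∈ H ↔ x.right = B x.left := fun x => by
      rw [← SetLike.mem_coe, hH, Set.mem_setOf_eq]
    exact (mem _).1 (H.mul_mem ((mem ⟨g, B g⟩).2 rfl) ((mem ⟨h, B h⟩).2 rfl))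
end

section
/- Let G be a group and let B : G → G be a Rota-Baxter operator (of weight 1) on G. Define a new binary operation on G by g₁ * g₂ := g₁ · B(g₁)·g₂·B(g₁)⁻¹. Then (G, *) is a group: * is associative, the identity element e of G is the identity for *, and the inverse of g with respect to * is g† = B(g)⁻¹·g⁻¹·B(g). -/
/-!
The Rota-Baxter identity says exactly that `B` is a homomorphism from the derived product to the
original one. Hence `B (g₁ * g₂)` acts by conjugation as `B g₁` after `B g₂`, which gives
associativity, and `B 1 = 1`, which gives the identity laws. The right inverse law for `g†` is a
computation; applying `B` to it yields `B g† = (B g)⁻¹`, from which the left inverse law follows.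
-/

/-- For a Rota-Baxter operator `B` (of weight 1) on a group `G`, the derived
product `g₁ * g₂ = g₁ · B(g₁) g₂ B(g₁)⁻¹` makes `G` into a group with the same
identity, where the inverse of `g` is `g† = B(g)⁻¹ g⁻¹ B(g)`. -/
theorem stmt4 {G : Type*} [Group G] (B : G → G)
    (hB : ∀ g h : G, B g * B h = B (g * (B g * h * (B g)⁻¹)))
    (star : G → G → G)
    (hstar : ∀ g₁ g₂ : G, star g₁ g₂ = g₁ * (B g₁ * g₂ * (B g₁)⁻¹)) :
    (∀ g₁ g₂ g₃ : G, star (star g₁ g₂) g₃ = star g₁ (star g₂ g₃)) ∧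
    (∀ g : G, star 1 g = g) ∧ (∀ g : G, star g 1 = g) ∧
    (∀ g : G, star g ((B g)⁻¹ * g⁻¹ * B g) = 1) ∧
    (∀ g : G, star ((B g)⁻¹ * g⁻¹ * B g) g = 1) := by
  have hB1 : B 1 = 1 := by simpa using hB 1 1
  -- `B` is multiplicative from `star` to the original product.
  have hmul : ∀ g h : G, B (star g h) = B g * B h := fun g h => by rw [hstar, hB]
  have hright : ∀ g : G, star g ((B g)⁻¹ * g⁻¹ * B g) = 1 := fun g => by
    rw [hstar]; group
  have hinv : ∀ g : G, B ((B g)⁻¹ * g⁻¹ * B g) = (B g)⁻¹ := fun g =>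
    eq_inv_of_mul_eq_one_right (by rw [← hmul, hright, hB1])
  refine ⟨fun g₁ g₂ g₃ => ?_, fun g => ?_, fun g => ?_, hright, fun g => ?_⟩
  · rw [hstar (star g₁ g₂) g₃, hmul, hstar g₁ g₂, hstar g₁ (star g₂ g₃), hstar g₂ g₃]
    group
  · simp [hstar, hB1]
  · simp [hstar]
  · rw [hstar, hinv]; group
end

section
/- Let G be a group and let B : G → G be a Rota-Baxter operator (of weight 1) on G. Let * denote the derived product g₁ * g₂ = g₁ · B(g₁)·g₂·B(g₁)⁻¹ on G and let g† = B(g)⁻¹·g⁻¹·B(g) denote the inverse of g with respect to *. Then B is a Rota-Baxter operator (of weight 1) on the group (G, *), i.e. B(g) * B(h) = B(g * B(g) * h * B(g)†) for all g, h ∈ G. -/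
/-- A Rota-Baxter operator `B` (of weight 1) on a group `G` is also a
Rota-Baxter operator (of weight 1) on the derived group `(G, *)`, where
`g₁ * g₂ = g₁ · B(g₁) g₂ B(g₁)⁻¹` and the `*`-inverse is
`g† = B(g)⁻¹ g⁻¹ B(g)`. -/
theorem stmt5 {G : Type*} [Group G] (B : G → G)
    (hB : ∀ g h : G, B g * B h = B (g * (B g * h * (B g)⁻¹)))
    (star : G → G → G)
    (hstar : ∀ g₁ g₂ : G, star g₁ g₂ = g₁ * (B g₁ * g₂ * (B g₁)⁻¹))
    (dag : G → G) (hdag : ∀ g : G, dag g = (B g)⁻¹ * g⁻¹ * B g) :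
    ∀ g h : G,
      star (B g) (B h) = B (star (star (star g (B g)) h) (dag (B g))) := by
  -- The Rota-Baxter identity says that `B` is a homomorphism from `(G, *)` to `(G, ·)`.
  have hom : ∀ x y : G, B (star x y) = B x * B y := fun x y => by rw [hstar, hB]
  have one : B 1 = 1 := by simpa using hB 1 1
  have inv : ∀ x : G, B (dag x) = (B x)⁻¹ := fun x => by
    have star_dag : star x (dag x) = 1 := by rw [hstar, hdag]; group
    refine eq_inv_of_mul_eq_one_right ?_
    rw [← hom, star_dag, one]
  intro g h
  rw [hom, hom, hom, inv, hstar]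
  simp only [mul_assoc]
end

section
/- Let G be a group and let B : G → G be a Rota-Baxter operator (of weight 1) on G. Define C : G → G by C(g) = B(g⁻¹). Then C is a Rota-Baxter operator of weight −1 on G, i.e. C(g₁)·C(g₂) = C((C(g₁)·g₂·C(g₁)⁻¹) · g₁) for all g₁, g₂ ∈ G. -/
/-- If `B` is a Rota-Baxter operator (of weight 1) on a group `G`, then
`C g = B g⁻¹` is a Rota-Baxter operator of weight `-1` on `G`. -/
theorem stmt6 {G : Type*} [Group G] (B : G → G)
    (hB : ∀ g h : G, B g * B h = B (g * (B g * h * (B g)⁻¹)))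
    (C : G → G) (hC : ∀ g : G, C g = B g⁻¹) :
    ∀ g₁ g₂ : G, C g₁ * C g₂ = C ((C g₁ * g₂ * (C g₁)⁻¹) * g₁) := by
  intro g₁ g₂
  simp only [hC, hB]
  congr 1
  group
end

section
/- Let G be a group and let G₊, G₋ be subgroups of G such that G = G₊·G₋ and G₊ ∩ G₋ = {e}. Define C : G → G by C(g) = g₊, where g = g₊·g₋ is the (unique) decomposition with g₊ ∈ G₊ and g₋ ∈ G₋. Then C is a Rota-Baxter operator of weight −1 on G, i.e. C(g₁)·C(g₂) = C((C(g₁)·g₂·C(g₁)⁻¹)·g₁) for all g₁, g₂ ∈ G. -/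
/-!
Write `gᵢ = pᵢ mᵢ` with `pᵢ ∈ Gp` and `mᵢ ∈ Gm`. Since `p₁⁻¹ g₁ = m₁`, the argument of `C` on the
right-hand side is `p₁ g₂ p₁⁻¹ g₁ = (p₁ p₂) (m₂ m₁)`. Trivial intersection makes the decomposition
unique, so the `Gp`-part of this product is `p₁ p₂`, which is the left-hand side.
-/

/-- If `G = Gp · Gm` with `Gp ∩ Gm = {e}`, then `C (gp * gm) = gp` is a
Rota-Baxter operator of weight `-1` on `G`. -/
theorem stmt7 {G : Type*} [Group G] (Gp Gm : Subgroup G)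
    (hdisj : Gp ⊓ Gm = ⊥)
    (pp pm : G → G) (hpp : ∀ g : G, pp g ∈ Gp) (hpm : ∀ g : G, pm g ∈ Gm)
    (hdec : ∀ g : G, g = pp g * pm g)
    (C : G → G) (hC : ∀ g : G, C g = pp g) :
    ∀ g₁ g₂ : G, C g₁ * C g₂ = C ((C g₁ * g₂ * (C g₁)⁻¹) * g₁) := by
  have huniq : ∀ a ∈ Gp, ∀ b ∈ Gm, pp (a * b) = a := by
    intro a ha b hb
    have heq : a⁻¹ * pp (a * b) = b * (pm (a * b))⁻¹ := by
      rw [eq_mul_inv_iff_mul_eq, mul_assoc, ← hdec, inv_mul_cancel_left]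
    have hmem : a⁻¹ * pp (a * b) ∈ Gp ⊓ Gm :=
      ⟨Gp.mul_mem (Gp.inv_mem ha) (hpp _), heq ▸ Gm.mul_mem hb (Gm.inv_mem (hpm _))⟩
    rw [hdisj, Subgroup.mem_bot] at hmem
    exact (inv_mul_eq_one.mp hmem).symm
  intro g₁ g₂
  simp only [hC]
  -- Conjugating `g₂` by the `Gp`-part of `g₁` leaves a product already split along `Gp · Gm`.
  have hsplit : pp g₁ * g₂ * (pp g₁)⁻¹ * g₁ = (pp g₁ * pp g₂) * (pm g₂ * pm g₁) := by
    have h₁ : (pp g₁)⁻¹ * g₁ = pm g₁ := inv_mul_eq_iff_eq_mul.mpr (hdec g₁)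
    rw [mul_assoc _ (pp g₁)⁻¹, h₁, mul_assoc (pp g₁) (pp g₂), ← mul_assoc (pp g₂), ← hdec g₂,
      mul_assoc]
  rw [hsplit, huniq _ (Gp.mul_mem (hpp _) (hpp _)) _ (Gm.mul_mem (hpm _) (hpm _))]
end

section
/- Let G be a group, let B : G → G be a Rota-Baxter operator (of weight 1) on G, and suppose D : G → G is a two-sided inverse of B (D ∘ B = id and B ∘ D = id). Then D is a differential operator of weight 1 on G, i.e. D(xy) = D(x) · x·D(y)·x⁻¹ for all x, y ∈ G. Similarly, if C : G → G is a Rota-Baxter operator of weight −1 on G and D is a two-sided inverse of C, then D(xy) = (x·D(y)·x⁻¹) · D(x) for all x, y ∈ G. -/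
/-- The formal (two-sided) inverse of a Rota-Baxter operator of weight `1`
(resp. `-1`) on a group is a differential operator of weight `1`
(resp. `-1`). -/
theorem stmt8 {G : Type*} [Group G] :
    (∀ B D : G → G,
      (∀ g h : G, B g * B h = B (g * (B g * h * (B g)⁻¹))) →
      (∀ g : G, D (B g) = g) → (∀ g : G, B (D g) = g) →
      ∀ x y : G, D (x * y) = D x * (x * D y * x⁻¹)) ∧
    (∀ C D : G → G,
      (∀ g₁ g₂ : G, C g₁ * C g₂ = C ((C g₁ * g₂ * (C g₁)⁻¹) * g₁)) →
      (∀ g : G, D (C g) = g) → (∀ g : G, C (D g) = g) →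
      ∀ x y : G, D (x * y) = (x * D y * x⁻¹) * D x) := by
  -- Evaluate the Rota-Baxter identity at `D x`, `D y` and apply `D` to both sides.
  constructor
  · intro B D hB hDB hBD x y
    have h := congrArg D (hB (D x) (D y))
    rwa [hDB, hBD, hBD] at h
  · intro C D hC hDC hCD x y
    have h := congrArg D (hC (D x) (D y))
    rwa [hDC, hCD, hCD] at h
end

section
/- Let G be a group and let B : G → G be a Rota-Baxter operator (of weight 1) on G. Define B₊ : G → G by B₊(g) = g·B(g). Then B₊ is a group homomorphism from the derived group (G, *) to G, i.e. B₊(g₁ * g₂) = B₊(g₁)·B₊(g₂) for all g₁, g₂ ∈ G, where g₁ * g₂ = g₁ · B(g₁)·g₂·B(g₁)⁻¹. -/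
/-- For a Rota-Baxter operator `B` (of weight 1) on a group `G`, the map
`Bp g = g * B g` is a group homomorphism from the derived group `(G, *)`
to `G`. -/
theorem stmt10 {G : Type*} [Group G] (B : G → G)
    (hB : ∀ g h : G, B g * B h = B (g * (B g * h * (B g)⁻¹)))
    (star : G → G → G)
    (hstar : ∀ g₁ g₂ : G, star g₁ g₂ = g₁ * (B g₁ * g₂ * (B g₁)⁻¹))
    (Bp : G → G) (hBp : ∀ g : G, Bp g = g * B g) :
    ∀ g₁ g₂ : G, Bp (star g₁ g₂) = Bp g₁ * Bp g₂ := by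
  intro g₁ g₂
  -- `hB` turns `B (star g₁ g₂)` into `B g₁ * B g₂`, whose first factor cancels `(B g₁)⁻¹`.
  rw [hBp, hBp, hBp, hstar, ← hB]
  group
end

section
/- Let G be a group and let B : G → G be a Rota-Baxter operator (of weight 1) on G. Then the images G₋ := {B(g) : g ∈ G} and G₊ := {g·B(g) : g ∈ G} are subgroups of G (each contains the identity e and is closed under multiplication and inverses). -/
/-! The operation `g ∘ h = g * (B g * h * (B g)⁻¹)` has identity `1`, and
`(B g)⁻¹ * g⁻¹ * B g` is a right inverse of `g` for it. Both `B` and `g ↦ g * B g` turn `∘` into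
the multiplication of `G`, so their images are subgroups. -/

/-- For a Rota-Baxter operator `B` (of weight 1) on a group `G`, the images
`Gm = {B g}` and `Gp = {g * B g}` are subgroups of `G`. -/
theorem stmt11 {G : Type*} [Group G] (B : G → G)
    (hB : ∀ g h : G, B g * B h = B (g * (B g * h * (B g)⁻¹))) :
    (∃ Gm : Subgroup G, (Gm : Set G) = Set.range B) ∧
    (∃ Gp : Subgroup G, (Gp : Set G) = Set.range fun g => g * B g) := by
  have h1 : B 1 = 1 := by simpa using hB 1 1
  -- `B` inverts along the right inverse of `g` for `∘`.
  have hinv (g : G) : B ((B g)⁻¹ * g⁻¹ * B g) = (B g)⁻¹ := by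
    apply eq_inv_of_mul_eq_one_right
    rw [hB, ← h1]
    congr 1
    group
  refine ⟨⟨{ carrier := Set.range B, mul_mem' := ?_, one_mem' := ⟨1, h1⟩, inv_mem' := ?_ }, rfl⟩,
    ⟨{ carrier := Set.range fun g => g * B g, mul_mem' := ?_, one_mem' := ⟨1, by simp [h1]⟩,
       inv_mem' := ?_ }, rfl⟩⟩
  · rintro _ _ ⟨g, rfl⟩ ⟨h, rfl⟩
    exact ⟨_, (hB g h).symm⟩
  · rintro _ ⟨g, rfl⟩
    exact ⟨_, hinv g⟩
  · rintro _ _ ⟨g, rfl⟩ ⟨h, rfl⟩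
    refine ⟨g * (B g * h * (B g)⁻¹), ?_⟩
    simp only [← hB]
    group
  · rintro _ ⟨g, rfl⟩
    refine ⟨(B g)⁻¹ * g⁻¹ * B g, ?_⟩
    simp only [hinv]
    group
end

section
/- Let G be a group, let B : G → G be a Rota-Baxter operator (of weight 1) on G, and set G₋ := {B(g) : g ∈ G} and K₋ := {k ∈ G : k·B(k) = e}. Then K₋ ⊆ G₋ (indeed every k ∈ K₋ satisfies k = B(k)⁻¹ and lies in the image of B), and K₋ is a normal subgroup of G₋: for every g ∈ G and every k ∈ K₋, the element B(g)·k·B(g)⁻¹ again satisfies (B(g)·k·B(g)⁻¹) · B(B(g)·k·B(g)⁻¹) = e. -/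
/-!
The product `g ∘ h = g * (B g * h * (B g)⁻¹)` is a second group law on `G`, for which `B` is a
homomorphism and the inverse of `g` is `(B g)⁻¹ * g⁻¹ * B g`. If `k * B k = 1`, then the
`∘`-inverse of `k` is `k⁻¹`, so `B k⁻¹ = (B k)⁻¹ = k`. Moreover the `∘`-conjugate of such a `k` by
`g` is exactly `B g * k * (B g)⁻¹`, so applying the homomorphism `B` gives
`B (B g * k * (B g)⁻¹) = B g * B k * (B g)⁻¹ = (B g * k * (B g)⁻¹)⁻¹`.
-/

/-- For a Rota-Baxter operator `B` (of weight 1) on a group `G`, the kernel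
`K₋ = {k : k * B k = 1}` is contained in `G₋ = im B` (indeed `k = (B k)⁻¹`),
and it is normal in `G₋`: conjugating an element of `K₋` by any `B g` lands
again in `K₋`. -/
theorem stmt12 {G : Type*} [Group G] (B : G → G)
    (hB : ∀ g h : G, B g * B h = B (g * (B g * h * (B g)⁻¹))) :
    (∀ k : G, k * B k = 1 → k = (B k)⁻¹ ∧ ∃ g : G, B g = k) ∧
    (∀ g k : G, k * B k = 1 →
      (B g * k * (B g)⁻¹) * B (B g * k * (B g)⁻¹) = 1) := by
  have h1 : B 1 = 1 := by simpa using hB 1 1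
  -- `B` sends the `∘`-inverse of `g` to `(B g)⁻¹`.
  have hinv : ∀ g, B ((B g)⁻¹ * g⁻¹ * B g) = (B g)⁻¹ := by
    intro g
    apply eq_inv_of_mul_eq_one_right
    rw [hB, ← h1]
    congr 1
    group
  refine ⟨fun k hk => ?_, fun g k hk => ?_⟩
  · have hk' : k = (B k)⁻¹ := eq_inv_of_mul_eq_one_left hk
    exact ⟨hk', _, (hinv k).trans hk'.symm⟩
  · have hk' : B k = k⁻¹ := eq_inv_of_mul_eq_one_right hk
    have hx : B (g * (B g * k * (B g)⁻¹)) = B g * k⁻¹ := by rw [← hB, hk']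
    -- `B g * k * (B g)⁻¹` is the `∘`-product of `g ∘ k` with the `∘`-inverse of `g`.
    have hy := hB (g * (B g * k * (B g)⁻¹)) ((B g)⁻¹ * g⁻¹ * B g)
    rw [hx, hinv] at hy
    have e : g * (B g * k * (B g)⁻¹) *
        (B g * k⁻¹ * ((B g)⁻¹ * g⁻¹ * B g) * (B g * k⁻¹)⁻¹) = B g * k * (B g)⁻¹ := by group
    rw [e] at hy
    rw [← hy]
    group
end

section
/- Let G be a group, let B : G → G be a Rota-Baxter operator (of weight 1) on G, and set G₊ := {g·B(g) : g ∈ G} and K₊ := {k ∈ G : B(k) = e}. Then K₊ ⊆ G₊, and K₊ is a normal subgroup of G₊: for every g ∈ G and every k ∈ K₊, the element (g·B(g))·k·(g·B(g))⁻¹ again satisfies B((g·B(g))·k·(g·B(g))⁻¹) = e. -/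
/-!
The operation `g ∘ h = g * B g * h * (B g)⁻¹` is a second group structure on `G`, and `B` is a
homomorphism from it to `G`. The inverse of `g` for `∘` is `g' = (B g)⁻¹ * g⁻¹ * B g`, and
`(g ∘ k) ∘ g' = (g * B g) * k * (g * B g)⁻¹` when `B k = 1`, so normality of `K₊` in `G₊` is
normality of a kernel.
-/


/-- For a Rota-Baxter operator `B` (of weight 1) on a group `G`, the kernel
`K₊ = {k : B k = 1}` is contained in `G₊ = {g * B g}`, and it is normal in
`G₊`: conjugating an element of `K₊` by any `g * B g` lands again in `K₊`. -/
theorem stmt13 {G : Type*} [Group G] (B : G → G)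
    (hB : ∀ g h : G, B g * B h = B (g * (B g * h * (B g)⁻¹))) :
    (∀ k : G, B k = 1 → ∃ g : G, g * B g = k) ∧
    (∀ g k : G, B k = 1 →
      B ((g * B g) * k * (g * B g)⁻¹) = 1) := by
  have h1 : B 1 = 1 := by simpa using hB 1 1
  refine ⟨fun k hk => ⟨k, by rw [hk, mul_one]⟩, fun g k hk => ?_⟩
  have hinv : B g * B ((B g)⁻¹ * g⁻¹ * B g) = 1 := by
    rw [hB, ← h1]
    congr 1
    group
  have hgk : B (g * (B g * k * (B g)⁻¹)) = B g := by rw [← hB, hk, mul_one]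
  have key := hB (g * (B g * k * (B g)⁻¹)) ((B g)⁻¹ * g⁻¹ * B g)
  rw [hgk, hinv] at key
  rw [key]
  congr 1
  group
end

section
/- Let G be a group and let B : G → G be a Rota-Baxter operator (of weight 1) on G. Let G₋ = {B(g) : g ∈ G} and G₊ = {g·B(g) : g ∈ G}, which are subgroups of G, and let K₋ = {k ∈ G : k·B(k) = e} and K₊ = {k ∈ G : B(k) = e}, which are normal subgroups of G₋ and G₊ respectively. Then there is a group isomorphism Θ : G₋/K₋ → G₊/K₊ (the Cayley transform of B) satisfying Θ(B(g)·K₋) = (g·B(g))·K₊ for all g ∈ G. -/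
/-!
Write `g ∘ h = g * (B g * h * (B g)⁻¹)`. Both `B` and `g ↦ g * B g` turn `∘` into the product of
`G`, so they induce surjections `G → Gm ⧸ Km` and `G → Gp ⧸ Kp` that carry `∘` to multiplication.
These surjections have the same fibres. Indeed `h = g ∘ k` is solvable in `k` for all `g`, `h`, so it
suffices that they have the same kernel, and `g ∘ B g = g * B g` gives `B g * B (B g) = B (g * B g)`:
the left side is `1` iff `B g ∈ Km`, the right side is `1` iff `g * B g ∈ Kp`. Two surjections with
the same fibres have isomorphic targets (`exists_mulEquiv_of_fibres`).
-/

/-- Two surjections from a magma `(X, op)` onto groups that are multiplicative and have the same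
fibres differ by an isomorphism of their targets. -/
theorem exists_mulEquiv_of_fibres {X A A' : Type*} [Group A] [Group A'] (op : X → X → X)
    (φ : X → A) (ψ : X → A')
    (hφ : Function.Surjective φ) (hψ : Function.Surjective ψ)
    (mφ : ∀ x y, φ (op x y) = φ x * φ y) (mψ : ∀ x y, ψ (op x y) = ψ x * ψ y)
    (hfib : ∀ x y, φ x = φ y ↔ ψ x = ψ y) :
    ∃ Θ : A ≃* A', ∀ x, Θ (φ x) = ψ x := by
  have key : ∀ x, ψ (Function.surjInv hφ (φ x)) = ψ x := fun x =>
    (hfib _ _).1 (Function.surjInv_eq hφ (φ x))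
  let f : A →* A' := MonoidHom.mk' (fun a => ψ (Function.surjInv hφ a)) (by
    intro a b
    obtain ⟨x, rfl⟩ := hφ a
    obtain ⟨y, rfl⟩ := hφ b
    rw [← mφ, key, key, key, mψ])
  have hf : ∀ x, f (φ x) = ψ x := key
  refine ⟨MulEquiv.ofBijective f ⟨?_, ?_⟩, hf⟩
  · intro a b hab
    obtain ⟨x, rfl⟩ := hφ a
    obtain ⟨y, rfl⟩ := hφ b
    rw [hf, hf] at hab
    exact (hfib x y).2 hab
  · intro c
    obtain ⟨x, rfl⟩ := hψ c
    exact ⟨φ x, hf x⟩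


/-- The Cayley transform: for a Rota-Baxter operator `B` (of weight 1) on a
group `G`, there is a group isomorphism `Θ : Gm/Km ≃* Gp/Kp` with
`Θ (B g · Km) = (g · B g) · Kp` for all `g`. -/
theorem stmt14 {G : Type*} [Group G] (B : G → G)
    (hB : ∀ g h : G, B g * B h = B (g * (B g * h * (B g)⁻¹)))
    (Gm Gp : Subgroup G)
    (hGm : (Gm : Set G) = Set.range B)
    (hGp : (Gp : Set G) = Set.range fun g => g * B g)
    (hmemm : ∀ g : G, B g ∈ Gm) (hmemp : ∀ g : G, g * B g ∈ Gp)
    (Km : Subgroup Gm) (Kp : Subgroup Gp)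
    (hKm : ∀ k : Gm, k ∈ Km ↔ (k : G) * B (k : G) = 1)
    (hKp : ∀ k : Gp, k ∈ Kp ↔ B (k : G) = 1)
    [Km.Normal] [Kp.Normal] :
    ∃ Θ : (Gm ⧸ Km) ≃* (Gp ⧸ Kp),
      ∀ g : G, Θ (QuotientGroup.mk ⟨B g, hmemm g⟩) =
        QuotientGroup.mk ⟨g * B g, hmemp g⟩ := by
  let op : G → G → G := fun g h => g * (B g * h * (B g)⁻¹)
  let φ₀ : G → Gm := fun g => ⟨B g, hmemm g⟩
  let ψ₀ : G → Gp := fun g => ⟨g * B g, hmemp g⟩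
  have mφ : ∀ g h, φ₀ (op g h) = φ₀ g * φ₀ h := fun g h => Subtype.ext (hB g h).symm
  have mψ : ∀ g h, ψ₀ (op g h) = ψ₀ g * ψ₀ h := by
    intro g h
    apply Subtype.ext
    change op g h * B (op g h) = g * B g * (h * B h)
    rw [← hB g h]
    simp only [op]
    group
  have hker : ∀ g, φ₀ g ∈ Km ↔ ψ₀ g ∈ Kp := by
    intro g
    rw [hKm, hKp]
    change B g * B (B g) = 1 ↔ B (g * B g) = 1
    rw [hB g (B g), mul_inv_cancel_right]
  -- The solution of `op g k = h`.
  have hdiv : ∀ g h, op g ((B g)⁻¹ * g⁻¹ * h * B g) = h := by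
    intro g h
    simp only [op]
    group
  refine exists_mulEquiv_of_fibres op (fun g => (QuotientGroup.mk (φ₀ g) : Gm ⧸ Km))
    (fun g => (QuotientGroup.mk (ψ₀ g) : Gp ⧸ Kp)) ?_ ?_ ?_ ?_ ?_
  · intro q
    obtain ⟨⟨a, ha⟩, rfl⟩ := QuotientGroup.mk_surjective q
    obtain ⟨g, rfl⟩ : a ∈ Set.range B := hGm ▸ ha
    exact ⟨g, rfl⟩
  · intro q
    obtain ⟨⟨a, ha⟩, rfl⟩ := QuotientGroup.mk_surjective q
    obtain ⟨g, rfl⟩ : a ∈ Set.range fun g => g * B g := hGp ▸ ha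
    exact ⟨g, rfl⟩
  · intro g h
    simp only [mφ, QuotientGroup.mk_mul]
  · intro g h
    simp only [mψ, QuotientGroup.mk_mul]
  · intro g h
    obtain ⟨k, rfl⟩ : ∃ k, op g k = h := ⟨_, hdiv g h⟩
    simp only [mφ, mψ, QuotientGroup.eq, inv_mul_cancel_left]
    exact hker k
end

section
/- Let G be a group and let B : G → G be a Rota-Baxter operator (of weight 1) on G. Define Φ : G → G × G by Φ(g) = (g·B(g), B(g)), where G × G carries the componentwise product. Then Φ is an injective group homomorphism from the derived group (G, *) (with g₁ * g₂ = g₁·B(g₁)·g₂·B(g₁)⁻¹) to G × G, and its image is exactly the set G_Θ = {(a·B(a)·k, B(a)) : a ∈ G, k ∈ G with B(k) = e}. -/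
/-- For a Rota-Baxter operator `B` (of weight 1) on a group `G`, the map
`Φ g = (g * B g, B g)` is an injective group homomorphism from the derived
group `(G, *)` to `G × G`, with image
`G_Θ = {(a·B(a)·k, B(a)) : a ∈ G, B k = 1}`. -/
theorem stmt15 {G : Type*} [Group G] (B : G → G)
    (hB : ∀ g h : G, B g * B h = B (g * (B g * h * (B g)⁻¹)))
    (star : G → G → G)
    (hstar : ∀ g₁ g₂ : G, star g₁ g₂ = g₁ * (B g₁ * g₂ * (B g₁)⁻¹))
    (Φ : G → G × G) (hΦ : ∀ g : G, Φ g = (g * B g, B g)) :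
    Function.Injective Φ ∧
    (∀ g₁ g₂ : G, Φ (star g₁ g₂) = Φ g₁ * Φ g₂) ∧
    Set.range Φ =
      {p : G × G | ∃ a k : G, B k = 1 ∧ p = (a * B a * k, B a)} := by
  have hB1 : B 1 = 1 := by simpa using hB 1 1
  refine ⟨fun x y h => ?_, fun x y => ?_, ?_⟩
  · simp only [hΦ, Prod.mk.injEq] at h
    obtain ⟨h₁, h₂⟩ := h
    rw [h₂] at h₁
    exact mul_right_cancel h₁
  · simp only [hΦ, hstar, Prod.mk_mul_mk, ← hB, Prod.mk.injEq, and_true]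
    group
  · ext p
    constructor
    · rintro ⟨g, rfl⟩
      exact ⟨g, 1, hB1, by rw [hΦ, mul_one]⟩
    · rintro ⟨a, k, hk, rfl⟩
      -- The preimage is the derived product of `a` and `k`; since `B k = 1`, it has the same
      -- value under `B` as `a`.
      refine ⟨a * (B a * k * (B a)⁻¹), ?_⟩
      rw [hΦ, ← hB, hk, mul_one]
      simp [mul_assoc]
end

section
/- (Factorization theorem for Rota-Baxter groups) Let G be a group and let B : G → G be a Rota-Baxter operator (of weight 1) on G. Set G_Θ = {(a·B(a)·k, B(a)) : a ∈ G, k ∈ G with B(k) = e} ⊆ G × G. Then every g ∈ G can be written as g = g₊·g₋⁻¹ for some (g₊, g₋) ∈ G_Θ (namely g₊ = g·B(g), g₋ = B(g)), and this expression is unique: if (g₊, g₋) and (h₊, h₋) are both in G_Θ and g₊·g₋⁻¹ = h₊·h₋⁻¹, then g₊ = h₊ and g₋ = h₋. -/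
/-- Factorization theorem for Rota-Baxter groups: every `g ∈ G` factors
uniquely as `g = g₊ * g₋⁻¹` with `(g₊, g₋) ∈ G_Θ`, where
`G_Θ = {(a·B(a)·k, B(a)) : a ∈ G, B k = 1}`. -/
theorem stmt16 {G : Type*} [Group G] (B : G → G)
    (hB : ∀ g h : G, B g * B h = B (g * (B g * h * (B g)⁻¹)))
    (GΘ : Set (G × G))
    (hGΘ : GΘ = {p : G × G | ∃ a k : G, B k = 1 ∧ p = (a * B a * k, B a)}) :
    (∀ g : G, (g * B g, B g) ∈ GΘ ∧ g = (g * B g) * (B g)⁻¹) ∧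
    (∀ p q : G × G, p ∈ GΘ → q ∈ GΘ →
      p.1 * p.2⁻¹ = q.1 * q.2⁻¹ → p = q) := by
  subst hGΘ
  have h1 : B 1 = 1 := by simpa using hB 1 1
  -- The second component is recovered from the quotient `p.1 * p.2⁻¹`: for `p = (a·B(a)·k, B a)`
  -- the Rota-Baxter identity at `(a, k)` gives `B (p.1 * p.2⁻¹) = B a * B k = B a`.
  have key : ∀ p ∈ {p : G × G | ∃ a k : G, B k = 1 ∧ p = (a * B a * k, B a)},
      p.2 = B (p.1 * p.2⁻¹) := by
    rintro _ ⟨a, k, hk, rfl⟩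
    simpa [hk, mul_assoc] using hB a k
  refine ⟨fun g => ⟨⟨g, 1, h1, by simp⟩, by simp⟩, fun p q hp hq h => ?_⟩
  have h2 : p.2 = q.2 := by rw [key p hp, key q hq, h]
  rw [h2] at h
  exact Prod.ext (mul_right_cancel h) h2
end

section
/- Let G be a group with two subgroups G₊ and G₋, and let G̃ be a subgroup of the product group G₊ × G₋. Assume each element g ∈ G can be uniquely decomposed as g = g₊·g₋⁻¹ with (g₊, g₋) ∈ G̃. Define B : G → G by B(g₊·g₋⁻¹) = g₋, i.e. B(g) is the second component of the unique pair in G̃ decomposing g. Then B is a Rota-Baxter operator (of weight 1) on G. -/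
/-- If every `g ∈ G` decomposes uniquely as `g = gp * gm⁻¹` with
`(gp, gm)` in a subgroup `G̃` of `Gp × Gm`, then `B (gp * gm⁻¹) = gm`
is a Rota-Baxter operator (of weight 1) on `G`. -/
theorem stmt17 {G : Type*} [Group G] (Gp Gm : Subgroup G)
    (Gt : Subgroup (Gp × Gm))
    (hfact : ∀ g : G, ∃! p : Gp × Gm,
      p ∈ Gt ∧ g = (p.1 : G) * (p.2 : G)⁻¹)
    (B : G → G)
    (hBdef : ∀ (g : G) (p : Gp × Gm), p ∈ Gt →
      g = (p.1 : G) * (p.2 : G)⁻¹ → B g = (p.2 : G)) :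
    ∀ g h : G, B g * B h = B (g * (B g * h * (B g)⁻¹)) := by
  intro g h
  obtain ⟨p, ⟨hp, hg⟩, -⟩ := hfact g
  obtain ⟨q, ⟨hq, hh⟩, -⟩ := hfact h
  -- The product pair `p * q ∈ G̃` decomposes the argument on the right:
  -- `g * (p₂ * h * p₂⁻¹) = (p₁ * q₁) * (p₂ * q₂)⁻¹`.
  rw [hBdef g p hp hg, hBdef h q hq hh,
    hBdef (g * (p.2 * h * (p.2 : G)⁻¹)) (p * q) (Gt.mul_mem hp hq)
      (by rw [hg, hh]; simp [mul_assoc])]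
  simp
end

section
/- Let (g, [·,·]) be a Lie algebra over a field and let B : g → g be a Rota-Baxter operator of weight 1 on g. Define u ▷ v := [B(u), v]. Then (g, [·,·], ▷) is a post-Lie algebra; that is, ▷ is bilinear and for all u, v, w ∈ g: u ▷ [v, w] = [u ▷ v, w] + [v, u ▷ w], and [u, v] ▷ w = a_▷(u, v, w) − a_▷(v, u, w), where a_▷(u, v, w) := u ▷ (v ▷ w) − (u ▷ v) ▷ w. -/
/-- For a Rota-Baxter operator `B` of weight 1 on a Lie algebra `L`, the
product `u ▷ v = [B u, v]` makes `(L, [·,·], ▷)` a post-Lie algebra. -/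
theorem stmt19 {K : Type*} [Field K] {L : Type*} [LieRing L] [LieAlgebra K L]
    (B : L →ₗ[K] L)
    (hB : ∀ u v : L, ⁅B u, B v⁆ = B (⁅B u, v⁆ + ⁅u, B v⁆ + ⁅u, v⁆))
    (tr : L → L → L) (htr : ∀ u v : L, tr u v = ⁅B u, v⁆) :
    -- ▷ is bilinear
    ((∀ u u' v : L, tr (u + u') v = tr u v + tr u' v) ∧
     (∀ u v v' : L, tr u (v + v') = tr u v + tr u v') ∧
     (∀ (a : K) (u v : L), tr (a • u) v = a • tr u v) ∧
     (∀ (a : K) (u v : L), tr u (a • v) = a • tr u v)) ∧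
    -- u ▷ [v, w] = [u ▷ v, w] + [v, u ▷ w]
    (∀ u v w : L, tr u ⁅v, w⁆ = ⁅tr u v, w⁆ + ⁅v, tr u w⁆) ∧
    -- [u, v] ▷ w = a_▷(u, v, w) − a_▷(v, u, w)
    (∀ u v w : L, tr ⁅u, v⁆ w =
      (tr u (tr v w) - tr (tr u v) w) - (tr v (tr u w) - tr (tr v u) w)) := by
  simp only [htr]
  refine ⟨⟨by simp, by simp, by simp, by simp⟩, fun u v w => leibniz_lie _ _ _, fun u v w => ?_⟩
  -- By the Jacobi identity the iterated products on the right combine to `⁅⁅B u, B v⁆, w⁆`;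
  -- the Rota-Baxter identity expands this, and all terms but `⁅B ⁅u, v⁆, w⁆` cancel.
  have h : ⁅B u, ⁅B v, w⁆⁆ - ⁅B v, ⁅B u, w⁆⁆ =
      ⁅B ⁅B u, v⁆, w⁆ - ⁅B ⁅B v, u⁆, w⁆ + ⁅B ⁅u, v⁆, w⁆ := by
    rw [← lie_lie, hB, ← lie_skew u (B v)]
    simp only [map_add, map_neg, add_lie, neg_lie, sub_eq_add_neg]
  rw [sub_sub_sub_comm, h]
  abel
end
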